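/- arXiv:1501.01498 — 2 statements merged into one kernel-verified Lean document; each statement's English description precedes it below -/
import Mathlib

section
/- Let m be a Borel probability measure on ℝ with CDF F. For each n ≥ 1 and k ∈ {1,…,n}, set x_k(n) := (n+1) ∫_{(2k−1)/(2(n+1))}^{(2k+1)/(2(n+1))} F⁻¹(w) dw. Then the empirical measures m_n := (1/n) Σ_{k=1}^n δ_{x_k(n)} converge weakly to m as n → ∞, i.e. (1/n) Σ_{k=1}^n f(x_k(n)) → ∫_ℝ f dm for every bounded continuous f : ℝ → ℝ. -/
open MeasureTheory Filter Set

noncomputable section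

/-- The pseudo-inverse `F⁻¹(v) = inf {x | v ≤ F x}` of a CDF. -/
def cdfInv (F : ℝ → ℝ) (v : ℝ) : ℝ := sInf {x : ℝ | v ≤ F x}

section Helpers

lemma cdfInv_le_iff (m : Measure ℝ) [IsProbabilityMeasure m]
    (F : ℝ → ℝ) (hF : ∀ x : ℝ, F x = (m (Iic x)).toReal) (v : ℝ) (hv : v ∈ Ioo (0:ℝ) 1) (y : ℝ) :
    cdfInv F v ≤ y ↔ v ≤ F y := by
  have hFc : F = ProbabilityTheory.cdf m := by
    funext z
    rw [hF, ProbabilityTheory.cdf_eq_real]; rfl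
  subst hFc
  have hbot := ProbabilityTheory.tendsto_cdf_atBot m
  have htop := ProbabilityTheory.tendsto_cdf_atTop m
  have hmono := ProbabilityTheory.monotone_cdf m
  have hne : {x : ℝ | v ≤ ProbabilityTheory.cdf m x}.Nonempty := by
    obtain ⟨z, hz⟩ := (htop.eventually (lt_mem_nhds hv.2)).exists
    exact ⟨z, hz.le⟩
  have hbdd : BddBelow {x : ℝ | v ≤ ProbabilityTheory.cdf m x} := by
    obtain ⟨z, hz⟩ := (hbot.eventually (gt_mem_nhds hv.1)).exists
    refine ⟨z, fun w hw => ?_⟩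
    by_contra hlt
    have := hmono (not_le.1 hlt).le
    have hw' : v ≤ ProbabilityTheory.cdf m w := hw
    linarith
  constructor
  · intro h
    have hr := (ProbabilityTheory.cdf m).right_continuous y
    have hr' : Tendsto (ProbabilityTheory.cdf m) (nhdsWithin y (Ioi y))
        (nhds (ProbabilityTheory.cdf m y)) := hr.mono_left (nhdsWithin_mono _ Ioi_subset_Ici_self)
    refine ge_of_tendsto hr' ?_
    filter_upwards [self_mem_nhdsWithin] with z hz
    obtain ⟨w, hw, hwz⟩ := exists_lt_of_csInf_lt hne (lt_of_le_of_lt h hz)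
    exact le_trans hw (hmono hwz.le)
  · intro h
    exact csInf_le hbdd h

lemma cdfInv_mono (m : Measure ℝ) [IsProbabilityMeasure m]
    (F : ℝ → ℝ) (hF : ∀ x : ℝ, F x = (m (Iic x)).toReal) :
    MonotoneOn (cdfInv F) (Ioo (0:ℝ) 1) := by
  intro a ha b hb hab
  rw [cdfInv_le_iff m F hF a ha]
  exact hab.trans ((cdfInv_le_iff m F hF b hb _).1 le_rfl)

lemma map_cdfInv (m : Measure ℝ) [IsProbabilityMeasure m]
    (F : ℝ → ℝ) (hF : ∀ x : ℝ, F x = (m (Iic x)).toReal) :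
    Measure.map (cdfInv F) (volume.restrict (Ioo (0:ℝ) 1)) = m := by
  have hme : AEMeasurable (cdfInv F) (volume.restrict (Ioo (0:ℝ) 1)) :=
    aemeasurable_restrict_of_monotoneOn measurableSet_Ioo (cdfInv_mono m F hF)
  have : IsFiniteMeasure (volume.restrict (Ioo (0:ℝ) 1)) := by
    refine ⟨?_⟩
    simp
  refine Measure.ext_of_Iic _ _ fun y => ?_
  rw [Measure.map_apply_of_aemeasurable hme measurableSet_Iic,
    Measure.restrict_apply' measurableSet_Ioo]
  have hset : cdfInv F ⁻¹' Iic y ∩ Ioo (0:ℝ) 1 = Iic (F y) ∩ Ioo 0 1 := by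
    ext v
    constructor
    · rintro ⟨h, hv⟩
      exact ⟨(cdfInv_le_iff m F hF v hv y).1 h, hv⟩
    · rintro ⟨h, hv⟩
      exact ⟨(cdfInv_le_iff m F hF v hv y).2 h, hv⟩
  have hF1 : F y ≤ 1 := by
    rw [hF]; exact prob_le_one (μ := m) |> fun h => ENNReal.toReal_mono ENNReal.one_ne_top h
  have hm : m (Iic y) = ENNReal.ofReal (F y) := by
    rw [hF, ENNReal.ofReal_toReal (measure_ne_top _ _)]
  rw [hset, hm]
  apply le_antisymm
  · calc volume (Iic (F y) ∩ Ioo 0 1) ≤ volume (Ioc 0 (F y)) :=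
          measure_mono fun v hv => ⟨hv.2.1, hv.1⟩
      _ = _ := by simp
  · calc ENNReal.ofReal (F y) = volume (Ioo 0 (F y)) := by simp
      _ ≤ volume (Iic (F y) ∩ Ioo 0 1) := measure_mono fun v hv => ⟨hv.2.le, hv.1, hv.2.trans_le hF1⟩

lemma integral_floor (h : ℕ → ℝ) (n : ℕ) (hn : 1 ≤ n) :
    ∫ v in Ioo (0:ℝ) 1, h ⌊(n:ℝ) * v⌋₊ = (1 / (n:ℝ)) * ∑ j ∈ Finset.range n, h j := by
  have hn0 : (n:ℝ) ≠ 0 := by positivity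
  rw [← integral_Ioc_eq_integral_Ioo, ← intervalIntegral.integral_of_le zero_le_one,
    intervalIntegral.integral_comp_mul_left (fun u => h ⌊u⌋₊) hn0]
  have key : ∀ j : ℕ, (fun u : ℝ => h j) =ᵐ[volume.restrict (uIoc (j:ℝ) ((j+1:ℕ):ℝ))]
      (fun u : ℝ => h ⌊u⌋₊) := by
    intro j
    have hle : (j:ℝ) ≤ ((j+1:ℕ):ℝ) := by push_cast; linarith
    rw [uIoc_of_le hle, ← restrict_Ioo_eq_restrict_Ioc]
    filter_upwards [self_mem_ae_restrict measurableSet_Ioo] with u hu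
    have : ⌊u⌋₊ = j := by
      rw [Nat.floor_eq_iff ((Nat.cast_nonneg j).trans hu.1.le)]
      refine ⟨hu.1.le, ?_⟩
      have := hu.2
      push_cast at this
      exact this
    rw [this]
  have hs := intervalIntegral.sum_integral_adjacent_intervals (μ := volume)
    (f := fun u : ℝ => h ⌊u⌋₊)
    (a := fun j : ℕ => (j:ℝ)) (n := n) (fun j _ =>
      (intervalIntegrable_const (c := h j)).congr_ae (key j))
  simp only [mul_zero, mul_one, smul_eq_mul, one_div]
  simp only [Nat.cast_zero] at hs
  rw [← hs]
  congr 1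
  refine Finset.sum_congr rfl fun j _ => ?_
  rw [← intervalIntegral.integral_congr_ae_restrict (key j)]
  simp

lemma avg_close (G : ℝ → ℝ) (a b c ε : ℝ) (hab : a < b)
    (hi : IntervalIntegrable G volume a b) (hG : ∀ w ∈ Icc a b, |G w - c| ≤ ε) :
    |(b - a)⁻¹ * (∫ w in a..b, G w) - c| ≤ ε := by
  have hpos : 0 < b - a := sub_pos.2 hab
  have h1 : ∫ w in a..b, (G w - c) = (∫ w in a..b, G w) - (b - a) * c := by
    rw [intervalIntegral.integral_sub hi intervalIntegrable_const]
    simp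
  have h2 : ‖∫ w in a..b, (G w - c)‖ ≤ ε * |b - a| := by
    apply intervalIntegral.norm_integral_le_of_norm_le_const
    intro w hw
    rw [uIoc_of_le hab.le] at hw
    exact hG w ⟨hw.1.le, hw.2⟩
  rw [h1, abs_of_pos hpos, Real.norm_eq_abs] at h2
  have h3 : (b - a)⁻¹ * (∫ w in a..b, G w) - c
      = (b - a)⁻¹ * ((∫ w in a..b, G w) - (b - a) * c) := by
    field_simp
  rw [h3, abs_mul, abs_of_pos (inv_pos.2 hpos), inv_mul_le_iff₀ hpos]
  linarith

lemma x_tendsto (G : ℝ → ℝ) (hG : MonotoneOn G (Ioo (0:ℝ) 1)) (x : ℕ → ℕ → ℝ)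
    (hx : ∀ n k : ℕ, 1 ≤ k → k ≤ n →
      x n k = ((n : ℝ) + 1) *
        ∫ w in ((2 * (k : ℝ) - 1) / (2 * ((n : ℝ) + 1)))..
            ((2 * (k : ℝ) + 1) / (2 * ((n : ℝ) + 1))), G w)
    (v : ℝ) (hv : v ∈ Ioo (0:ℝ) 1) (hc : ContinuousAt G v) :
    Tendsto (fun n : ℕ => x n (⌊(n:ℝ) * v⌋₊ + 1)) atTop (nhds (G v)) := by
  rw [Metric.tendsto_atTop]
  intro ε hε
  obtain ⟨δ, hδ, hd⟩ := Metric.continuousAt_iff.1 hc (ε/2) (half_pos hε)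
  obtain ⟨N, hN⟩ := exists_nat_gt (3 / δ)
  refine ⟨max N 1, fun n hn => ?_⟩
  have hn1 : 1 ≤ n := (le_max_right _ _).trans hn
  have hnN : (N:ℝ) ≤ n := by exact_mod_cast (le_max_left _ _).trans hn
  have hnpos : (0:ℝ) < n := by exact_mod_cast hn1
  have hnv : 0 ≤ (n:ℝ) * v := mul_nonneg hnpos.le hv.1.le
  have hlt : ⌊(n:ℝ) * v⌋₊ < n := by
    rw [Nat.floor_lt hnv]; nlinarith [hv.2]
  have hf1 := Nat.floor_le hnv
  have hf2 := Nat.lt_floor_add_one ((n:ℝ) * v)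
  have hk : ((⌊(n:ℝ) * v⌋₊ + 1 : ℕ) : ℝ) ≤ n := by exact_mod_cast hlt
  have hk1 : (1:ℝ) ≤ ((⌊(n:ℝ) * v⌋₊ + 1 : ℕ) : ℝ) := by push_cast; linarith [Nat.cast_nonneg (α := ℝ) ⌊(n:ℝ) * v⌋₊]
  rw [hx n _ (Nat.le_add_left 1 _) hlt]
  have hkl : (n:ℝ) * v < ((⌊(n:ℝ) * v⌋₊ + 1 : ℕ) : ℝ) := by push_cast; exact hf2
  have hku : ((⌊(n:ℝ) * v⌋₊ + 1 : ℕ) : ℝ) ≤ n * v + 1 := by push_cast; linarith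
  generalize ((⌊(n:ℝ) * v⌋₊ + 1 : ℕ) : ℝ) = k at *
  have hD : (0:ℝ) < 2 * ((n:ℝ) + 1) := by positivity
  have hδn : 3 < δ * n := by
    have := (div_lt_iff₀ hδ).1 (hN.trans_le hnN)
    linarith
  have hab : (2 * k - 1) / (2 * ((n : ℝ) + 1)) < (2 * k + 1) / (2 * ((n : ℝ) + 1)) := by
    gcongr; linarith
  have ha0 : 0 < (2 * k - 1) / (2 * ((n : ℝ) + 1)) := div_pos (by linarith) hD
  have hb1 : (2 * k + 1) / (2 * ((n : ℝ) + 1)) < 1 := by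
    rw [div_lt_one hD]; linarith
  have hlen : (2 * k + 1) / (2 * ((n : ℝ) + 1)) - (2 * k - 1) / (2 * ((n : ℝ) + 1))
      = ((n:ℝ) + 1)⁻¹ := by
    field_simp; ring
  have hint : IntervalIntegrable G volume ((2 * k - 1) / (2 * ((n : ℝ) + 1)))
      ((2 * k + 1) / (2 * ((n : ℝ) + 1))) := by
    apply MonotoneOn.intervalIntegrable
    rw [uIcc_of_le hab.le]
    exact hG.mono fun w hw => ⟨ha0.trans_le hw.1, hw.2.trans_lt hb1⟩
  have := avg_close G _ _ (G v) (ε/2) hab hint (fun w hw => by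
    have h1 : |w - v| < δ := by
      have hw1 := (div_le_iff₀ hD).1 hw.1
      have hw2 := (le_div_iff₀ hD).1 hw.2
      have hv1 := hv.1
      have hv2 := hv.2
      have hnn : (0:ℝ) < (n:ℝ) + 1 := by positivity
      rw [abs_lt]
      constructor
      · refine lt_of_mul_lt_mul_right ?_ hD.le
        nlinarith
      · refine lt_of_mul_lt_mul_right ?_ hD.le
        nlinarith
    exact (hd h1).le)
  rw [hlen, inv_inv] at this
  rw [Real.dist_eq]
  linarith

end Helpers

/-- **Weak convergence of the discretisation**: if
`x_k(n) = (n+1) ∫_{(2k−1)/(2(n+1))}^{(2k+1)/(2(n+1))} F⁻¹(w) dw`, then the empirical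
measures `(1/n) Σ_{k=1}^n δ_{x_k(n)}` converge weakly to `m`. -/
theorem discretisation_weak_convergence
    (m : Measure ℝ) [IsProbabilityMeasure m]
    (F : ℝ → ℝ) (hF : ∀ x : ℝ, F x = (m (Iic x)).toReal)
    (x : ℕ → ℕ → ℝ)
    (hx : ∀ n k : ℕ, 1 ≤ k → k ≤ n →
      x n k = ((n : ℝ) + 1) *
        ∫ w in ((2 * (k : ℝ) - 1) / (2 * ((n : ℝ) + 1)))..
            ((2 * (k : ℝ) + 1) / (2 * ((n : ℝ) + 1))), cdfInv F w) :
    ∀ f : ℝ → ℝ, Continuous f → (∃ M, ∀ y : ℝ, |f y| ≤ M) →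
      Tendsto (fun n : ℕ => (1 / (n : ℝ)) * ∑ k ∈ Finset.Icc 1 n, f (x n k)) atTop
        (nhds (∫ y, f y ∂m)) := by
  intro f hf ⟨M, hM⟩
  have hmono := cdfInv_mono m F hF
  have hme : AEMeasurable (cdfInv F) (volume.restrict (Ioo (0:ℝ) 1)) :=
    aemeasurable_restrict_of_monotoneOn measurableSet_Ioo hmono
  have hint : ∫ y, f y ∂m = ∫ v in Ioo (0:ℝ) 1, f (cdfInv F v) := by
    conv_lhs => rw [← map_cdfInv m F hF]
    exact integral_map hme hf.aestronglyMeasurable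
  rw [hint]
  have hdc : Tendsto (fun n : ℕ => ∫ v in Ioo (0:ℝ) 1, f (x n (⌊(n:ℝ) * v⌋₊ + 1))) atTop
      (nhds (∫ v in Ioo (0:ℝ) 1, f (cdfInv F v))) := by
    refine tendsto_integral_of_dominated_convergence (fun _ => M) ?_ ?_ ?_ ?_
    · intro n
      have h1 : Measurable (fun v : ℝ => ⌊(n:ℝ) * v⌋₊) :=
        Nat.measurable_floor.comp (measurable_const_mul _)
      have h2 : Measurable (fun j : ℕ => f (x n (j + 1))) := measurable_from_top
      exact (h2.comp h1).aestronglyMeasurable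
    · exact integrableOn_const (by simp)
    · intro n
      exact Eventually.of_forall fun v => hM _
    · have hcount := hmono.countable_not_continuousWithinAt
      have hae := hcount.ae_notMem (volume.restrict (Ioo (0:ℝ) 1))
      filter_upwards [hae, self_mem_ae_restrict measurableSet_Ioo] with v hv hvI
      have hc : ContinuousAt (cdfInv F) v := by
        by_contra hcon
        exact hv ⟨hvI, fun h => hcon (h.continuousAt (Ioo_mem_nhds hvI.1 hvI.2))⟩
      exact (hf.tendsto _).comp (x_tendsto _ hmono x hx v hvI hc)
  refine hdc.congr' ?_
  filter_upwards [eventually_ge_atTop 1] with n hn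
  rw [integral_floor (fun j => f (x n (j + 1))) n hn]
  congr 1
  rw [Finset.range_eq_Ico, Finset.sum_Ico_add' (fun j => f (x n j)) 0 n 1]
  rfl
end
end

section
/- Let p ∈ [1,∞). Let m and m′ be Borel probability measures on ℝ with CDFs F and G, and for n ≥ 1 let (x₁(n),…,x_n(n)) and (y₁(n),…,y_n(n)) be their discretisations of order n, i.e. x_k(n) := (n+1) ∫_{(2k−1)/(2(n+1))}^{(2k+1)/(2(n+1))} F⁻¹(w) dw and y_k(n) := (n+1) ∫_{(2k−1)/(2(n+1))}^{(2k+1)/(2(n+1))} G⁻¹(w) dw. Then lim_{n→∞} (1/n) Σ_{k=1}^n |x_k(n) − y_k(n)|^p = ∫₀¹ |F⁻¹(v) − G⁻¹(v)|^p dv, where the limit is taken in [0,+∞] (both sides may be infinite). -/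
open MeasureTheory Filter Set

noncomputable section

open Topology

lemma aux_mono (m : Measure ℝ) [IsProbabilityMeasure m] (F : ℝ → ℝ)
    (hF : ∀ x : ℝ, F x = (m (Iic x)).toReal) : MonotoneOn (cdfInv F) (Ioo 0 1) := by
  have hF' : F = ProbabilityTheory.cdf m := by
    funext x
    rw [hF, ProbabilityTheory.cdf_eq_real]; rfl
  intro u hu v hv huv
  have h1 := ProbabilityTheory.tendsto_cdf_atTop m
  have h0 := ProbabilityTheory.tendsto_cdf_atBot m
  rw [← hF'] at h1 h0
  have hm : Monotone F := by rw [hF']; exact ProbabilityTheory.monotone_cdf m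
  unfold cdfInv
  apply csInf_le_csInf
  · obtain ⟨c, hc⟩ := (h0.eventually_lt_const hu.1).exists
    refine ⟨c, fun z hz => ?_⟩
    by_contra hlt
    have h2 := hm (le_of_lt (not_le.mp hlt))
    have h3 : u ≤ F z := hz
    linarith
  · obtain ⟨c, hc⟩ := (h1.eventually_const_lt hv.2).exists
    exact ⟨c, hc.le⟩
  · intro z hz
    exact le_trans huv hz

/-- left endpoint -/
def aL (n k : ℕ) : ℝ := (2 * (k : ℝ) - 1) / (2 * ((n : ℝ) + 1))

/-- right endpoint -/
def bR (n k : ℕ) : ℝ := (2 * (k : ℝ) + 1) / (2 * ((n : ℝ) + 1))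

lemma bR_sub (n k : ℕ) : bR n k - aL n k = 1 / ((n : ℝ) + 1) := by
  unfold aL bR
  have : (n : ℝ) + 1 ≠ 0 := by positivity
  field_simp
  ring

lemma aL_lt (n k : ℕ) : aL n k < bR n k := by
  have := bR_sub n k
  have : (0 : ℝ) < 1 / ((n : ℝ) + 1) := by positivity
  linarith

lemma aL_pos (n k : ℕ) (h : 1 ≤ k) : 0 < aL n k := by
  have : (1 : ℝ) ≤ k := by exact_mod_cast h
  unfold aL
  apply div_pos <;> [linarith; positivity]

lemma bR_lt (n k : ℕ) (h : k ≤ n) : bR n k < 1 := by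
  have : (k : ℝ) ≤ n := by exact_mod_cast h
  unfold bR
  rw [div_lt_one (by positivity)]
  linarith

lemma Icc_sub (n k : ℕ) (h : 1 ≤ k) (h' : k ≤ n) : Icc (aL n k) (bR n k) ⊆ Ioo 0 1 :=
  fun _ hz => ⟨(aL_pos n k h).trans_le hz.1, hz.2.trans_lt (bR_lt n k h')⟩

lemma Icc_mono {φ : ℝ → ℝ} (hφ : MonotoneOn φ (Ioo 0 1)) (n k : ℕ) (h : 1 ≤ k) (h' : k ≤ n) :
    IntervalIntegrable φ volume (aL n k) (bR n k) := by
  apply MonotoneOn.intervalIntegrable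
  rw [uIcc_of_le (aL_lt n k).le]
  exact hφ.mono (Icc_sub n k h h')

lemma avg_bounds {φ : ℝ → ℝ} (hφ : MonotoneOn φ (Ioo 0 1)) (n k : ℕ) (h : 1 ≤ k) (h' : k ≤ n) :
    φ (aL n k) ≤ ((n : ℝ) + 1) * (∫ w in (aL n k)..(bR n k), φ w) ∧
    ((n : ℝ) + 1) * (∫ w in (aL n k)..(bR n k), φ w) ≤ φ (bR n k) := by
  have hi := Icc_mono hφ n k h h'
  have hs := Icc_sub n k h h'
  have hlt := aL_lt n k
  have hn : (0 : ℝ) < (n : ℝ) + 1 := by positivity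
  have ha := hs (left_mem_Icc.2 hlt.le)
  have hb := hs (right_mem_Icc.2 hlt.le)
  constructor
  · have := intervalIntegral.integral_mono_on hlt.le (intervalIntegrable_const (c := φ (aL n k)))
      hi (fun z hz => hφ ha (hs hz) hz.1)
    rw [intervalIntegral.integral_const, bR_sub, smul_eq_mul] at this
    calc φ (aL n k) = ((n : ℝ) + 1) * (1 / ((n : ℝ) + 1) * φ (aL n k)) := by field_simp
      _ ≤ _ := by gcongr
  · have := intervalIntegral.integral_mono_on hlt.le hi
      (intervalIntegrable_const (c := φ (bR n k))) (fun z hz => hφ (hs hz) hb hz.2)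
    rw [intervalIntegral.integral_const, bR_sub, smul_eq_mul] at this
    calc _ ≤ ((n : ℝ) + 1) * (1 / ((n : ℝ) + 1) * φ (bR n k)) := by gcongr
      _ = _ := by field_simp

/-- index of the cell -/
def kk (v : ℝ) (n : ℕ) : ℕ := ⌊((n : ℝ) + 1) * v + 1 / 2⌋₊

lemma kk_mem (v : ℝ) (hv : 0 < v) (n : ℕ) : v ∈ Ico (aL n (kk v n)) (bR n (kk v n)) := by
  have hn : (0 : ℝ) < (n : ℝ) + 1 := by positivity
  have h1 : (kk v n : ℝ) ≤ ((n : ℝ) + 1) * v + 1 / 2 := Nat.floor_le (by positivity)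
  have h2 : ((n : ℝ) + 1) * v + 1 / 2 < (kk v n : ℝ) + 1 := Nat.lt_floor_add_one _
  unfold aL bR
  constructor
  · rw [div_le_iff₀ (by positivity)]; linarith
  · rw [lt_div_iff₀ (by positivity)]; linarith

lemma kk_ev (v : ℝ) (hv : v ∈ Ioo (0 : ℝ) 1) : ∀ᶠ n : ℕ in atTop, 1 ≤ kk v n ∧ kk v n ≤ n := by
  have ht : Tendsto (fun n : ℕ => (n : ℝ) + 1) atTop atTop :=
    tendsto_atTop_add_const_right _ _ tendsto_natCast_atTop_atTop
  have e1 := ht.eventually_ge_atTop (1 / v)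
  have e2 := ht.eventually_ge_atTop (1 / (1 - v))
  have hv2 : 0 < 1 - v := by linarith [hv.2]
  filter_upwards [e1, e2] with n h1 h2
  rw [div_le_iff₀ hv.1] at h1
  rw [div_le_iff₀ hv2] at h2
  constructor
  · apply Nat.le_floor
    push_cast
    linarith
  · apply Nat.le_of_lt_succ
    rw [kk, Nat.floor_lt (by nlinarith)]
    push_cast
    nlinarith

lemma avg_tendsto {φ : ℝ → ℝ} (hφ : MonotoneOn φ (Ioo 0 1)) (v : ℝ) (hv : v ∈ Ioo (0 : ℝ) 1)
    (hc : ContinuousAt φ v) :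
    Tendsto (fun n : ℕ => ((n : ℝ) + 1) * (∫ w in (aL n (kk v n))..(bR n (kk v n)), φ w))
      atTop (𝓝 (φ v)) := by
  have hz : Tendsto (fun n : ℕ => 1 / ((n : ℝ) + 1)) atTop (𝓝 0) :=
    tendsto_one_div_add_atTop_nhds_zero_nat
  have ha : Tendsto (fun n => aL n (kk v n)) atTop (𝓝 v) := by
    refine tendsto_of_tendsto_of_tendsto_of_le_of_le (g := fun n : ℕ => v - 1 / ((n : ℝ) + 1))
      (h := fun _ => v) (by simpa using hz.const_sub v) tendsto_const_nhds ?_ ?_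
    · intro n
      have := bR_sub n (kk v n)
      have := (kk_mem v hv.1 n).2
      simp only
      linarith
    · intro n; exact (kk_mem v hv.1 n).1
  have hb : Tendsto (fun n => bR n (kk v n)) atTop (𝓝 v) := by
    refine tendsto_of_tendsto_of_tendsto_of_le_of_le (h := fun n : ℕ => v + 1 / ((n : ℝ) + 1))
      (g := fun _ => v) tendsto_const_nhds (by simpa using hz.const_add v) ?_ ?_
    · intro n; exact (kk_mem v hv.1 n).2.le
    · intro n
      have := bR_sub n (kk v n)
      have := (kk_mem v hv.1 n).1
      simp only
      linarith
  refine tendsto_of_tendsto_of_tendsto_of_le_of_le' (hc.tendsto.comp ha) (hc.tendsto.comp hb) ?_ ?_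
  · filter_upwards [kk_ev v hv] with n hn
    exact (avg_bounds hφ n _ hn.1 hn.2).1
  · filter_upwards [kk_ev v hv] with n hn
    exact (avg_bounds hφ n _ hn.1 hn.2).2

lemma ae_cont {φ : ℝ → ℝ} (hφ : MonotoneOn φ (Ioo 0 1)) :
    ∀ᵐ v ∂(volume.restrict (Ioo (0 : ℝ) 1)), ContinuousAt φ v := by
  rw [ae_restrict_iff' measurableSet_Ioo]
  have := hφ.countable_not_continuousWithinAt.ae_notMem volume
  filter_upwards [this] with v hv hv'
  by_contra hcon
  exact hv ⟨hv', fun h => hcon (h.continuousAt (isOpen_Ioo.mem_nhds hv'))⟩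

lemma jensen (p : ℝ) (hp : 1 ≤ p) {φ ψ : ℝ → ℝ} (hφ : MonotoneOn φ (Ioo 0 1))
    (hψ : MonotoneOn ψ (Ioo 0 1)) (n k : ℕ) (h : 1 ≤ k) (h' : k ≤ n) :
    ENNReal.ofReal (|((n : ℝ) + 1) * (∫ w in (aL n k)..(bR n k), φ w) -
      ((n : ℝ) + 1) * (∫ w in (aL n k)..(bR n k), ψ w)| ^ p) ≤
    ENNReal.ofReal ((n : ℝ) + 1) *
      ∫⁻ v in Ioc (aL n k) (bR n k), ENNReal.ofReal (|φ v - ψ v| ^ p) := by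
  have hn : (0 : ℝ) < (n : ℝ) + 1 := by positivity
  have hp0 : 0 < p := by linarith
  set ν : Measure ℝ := ENNReal.ofReal ((n : ℝ) + 1) • volume.restrict (Ioc (aL n k) (bR n k))
    with hν
  have hprob : IsProbabilityMeasure ν := by
    constructor
    rw [hν, Measure.smul_apply, Measure.restrict_apply_univ, Real.volume_Ioc, bR_sub, smul_eq_mul,
      ← ENNReal.ofReal_mul hn.le]
    rw [mul_one_div_cancel hn.ne', ENNReal.ofReal_one]
  have hsub : Ioc (aL n k) (bR n k) ⊆ Ioo 0 1 := Ioc_subset_Icc_self.trans (Icc_sub n k h h')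
  have hmeas : AEStronglyMeasurable (fun v => φ v - ψ v) ν := by
    apply AEStronglyMeasurable.smul_measure
    exact ((aemeasurable_restrict_of_monotoneOn measurableSet_Ioc (hφ.mono hsub)).sub
      (aemeasurable_restrict_of_monotoneOn measurableSet_Ioc (hψ.mono hsub))).aestronglyMeasurable
  have e1 : ((n : ℝ) + 1) * (∫ w in (aL n k)..(bR n k), φ w) -
      ((n : ℝ) + 1) * (∫ w in (aL n k)..(bR n k), ψ w) = ∫ v, (φ v - ψ v) ∂ν := by
    rw [← mul_sub, ← intervalIntegral.integral_sub (Icc_mono hφ n k h h') (Icc_mono hψ n k h h'),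
      intervalIntegral.integral_of_le (aL_lt n k).le, hν, integral_smul_measure,
      ENNReal.toReal_ofReal hn.le, smul_eq_mul]
  have e2 : ∀ r : ℝ, ENNReal.ofReal (|r| ^ p) = ‖r‖ₑ ^ p := by
    intro r
    rw [← ENNReal.ofReal_rpow_of_nonneg (abs_nonneg _) hp0.le, Real.enorm_eq_ofReal_abs]
  rw [e1, e2]
  simp_rw [e2]
  have e3 : ‖∫ v, (φ v - ψ v) ∂ν‖ₑ ≤ (∫⁻ v, ‖φ v - ψ v‖ₑ ^ p ∂ν) ^ (1 / p) := by
    calc _ ≤ ∫⁻ v, ‖φ v - ψ v‖ₑ ∂ν := enorm_integral_le_lintegral_enorm _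
      _ = eLpNorm (fun v => φ v - ψ v) 1 ν := (eLpNorm_one_eq_lintegral_enorm).symm
      _ ≤ eLpNorm (fun v => φ v - ψ v) (ENNReal.ofReal p) ν :=
        eLpNorm_le_eLpNorm_of_exponent_le (by simpa using hp) hmeas
      _ = _ := by
        rw [eLpNorm_eq_lintegral_rpow_enorm_toReal (by simpa using hp0) ENNReal.ofReal_ne_top,
          ENNReal.toReal_ofReal hp0.le]
  calc _ ≤ ((∫⁻ v, ‖φ v - ψ v‖ₑ ^ p ∂ν) ^ (1 / p)) ^ p := by gcongr
    _ = ∫⁻ v, ‖φ v - ψ v‖ₑ ^ p ∂ν := by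
      rw [← ENNReal.rpow_mul, one_div_mul_cancel hp0.ne', ENNReal.rpow_one]
    _ = _ := by rw [hν, lintegral_smul_measure, smul_eq_mul]

lemma upper (f : ℝ → ENNReal) (n : ℕ) :
    ∑ k ∈ Finset.Icc 1 n, ∫⁻ v in Ioc (aL n k) (bR n k), f v ≤ ∫⁻ v in Ioo (0 : ℝ) 1, f v := by
  rw [← lintegral_biUnion_finset]
  · apply lintegral_mono_set
    apply iUnion₂_subset
    intro k hk
    rw [Finset.mem_Icc] at hk
    exact Ioc_subset_Icc_self.trans (Icc_sub n k hk.1 hk.2)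
  · have key : ∀ i j : ℕ, i < j → Disjoint (Ioc (aL n i) (bR n i)) (Ioc (aL n j) (bR n j)) := by
      intro i j hij
      rw [Set.disjoint_left]
      intro z hz hz'
      have h1 : bR n i ≤ aL n j := by
        have : (i : ℝ) + 1 ≤ j := by exact_mod_cast hij
        unfold bR aL
        gcongr
        linarith
      exact absurd (hz.2.trans h1) (not_le.2 hz'.1)
    intro i _ j _ hij
    rcases lt_or_gt_of_ne hij with h | h
    · exact key i j h
    · exact (key j i h).symm
  · intro k _; exact measurableSet_Ioc

theorem discretisation_wasserstein_limit (p : ℝ) (hp : 1 ≤ p)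
    (m m' : Measure ℝ) [IsProbabilityMeasure m] [IsProbabilityMeasure m']
    (F G : ℝ → ℝ)
    (hF : ∀ x : ℝ, F x = (m (Iic x)).toReal)
    (hG : ∀ x : ℝ, G x = (m' (Iic x)).toReal)
    (x y : ℕ → ℕ → ℝ)
    (hx : ∀ n k : ℕ, 1 ≤ k → k ≤ n →
      x n k = ((n : ℝ) + 1) *
        ∫ w in ((2 * (k : ℝ) - 1) / (2 * ((n : ℝ) + 1)))..
            ((2 * (k : ℝ) + 1) / (2 * ((n : ℝ) + 1))), cdfInv F w)
    (hy : ∀ n k : ℕ, 1 ≤ k → k ≤ n →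
      y n k = ((n : ℝ) + 1) *
        ∫ w in ((2 * (k : ℝ) - 1) / (2 * ((n : ℝ) + 1)))..
            ((2 * (k : ℝ) + 1) / (2 * ((n : ℝ) + 1))), cdfInv G w) :
    Tendsto
      (fun n : ℕ =>
        ENNReal.ofReal ((1 / (n : ℝ)) * ∑ k ∈ Finset.Icc 1 n, |x n k - y n k| ^ p))
      atTop
      (nhds (∫⁻ v in Ioo (0:ℝ) 1, ENNReal.ofReal (|cdfInv F v - cdfInv G v| ^ p))) := by
  have hφ := aux_mono m F hF
  have hψ := aux_mono m' G hG
  set φ := cdfInv F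
  set ψ := cdfInv G
  have hp0 : 0 < p := by linarith
  replace hx : ∀ n k : ℕ, 1 ≤ k → k ≤ n →
      x n k = ((n : ℝ) + 1) * (∫ w in (aL n k)..(bR n k), φ w) := hx
  replace hy : ∀ n k : ℕ, 1 ≤ k → k ≤ n →
      y n k = ((n : ℝ) + 1) * (∫ w in (aL n k)..(bR n k), ψ w) := hy
  set c : ℕ → ℕ → ENNReal := fun n k => ENNReal.ofReal (|x n k - y n k| ^ p) with hc
  have hS : ∀ n : ℕ, ENNReal.ofReal ((1 / (n : ℝ)) * ∑ k ∈ Finset.Icc 1 n, |x n k - y n k| ^ p)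
      = ENNReal.ofReal (1 / (n : ℝ)) * ∑ k ∈ Finset.Icc 1 n, c n k := by
    intro n
    rw [ENNReal.ofReal_mul (by positivity), ENNReal.ofReal_sum_of_nonneg]
    intro k _; positivity
  simp_rw [hS]
  refine tendsto_of_le_liminf_of_limsup_le ?_ ?_
  · set f : ℕ → ℝ → ENNReal := fun n v =>
      ∑ k ∈ Finset.Icc 1 n, (Ico (aL n k) (bR n k)).indicator (fun _ => c n k) v with hf
    have hfm : ∀ n, Measurable (f n) := by
      intro n
      apply Finset.measurable_fun_sum
      intro k _
      exact measurable_const.indicator measurableSet_Ico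
    calc _ ≤ ∫⁻ v in Ioo (0:ℝ) 1, liminf (fun n => f n v) atTop := by
          apply lintegral_mono_ae
          filter_upwards [ae_cont hφ, ae_cont hψ, ae_restrict_mem measurableSet_Ioo]
            with v h1 h2 hv
          have t1 := (avg_tendsto hφ v hv h1).sub (avg_tendsto hψ v hv h2)
          have t2 : Tendsto (fun n => c n (kk v n)) atTop
              (𝓝 (ENNReal.ofReal (|φ v - ψ v| ^ p))) := by
            have t3 := ENNReal.tendsto_ofReal (t1.abs.rpow_const (p := p) (Or.inr hp0.le))
            refine t3.congr' ?_
            filter_upwards [kk_ev v hv] with n hn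
            simp only [hc]
            rw [hx n _ hn.1 hn.2, hy n _ hn.1 hn.2]
          rw [← t2.liminf_eq]
          refine liminf_le_liminf ?_
          filter_upwards [kk_ev v hv] with n hn
          simp only [hf]
          have := Finset.single_le_sum (s := Finset.Icc 1 n)
            (f := fun k => (Ico (aL n k) (bR n k)).indicator (fun _ => c n k) v)
            (fun _ _ => bot_le) (Finset.mem_Icc.2 hn)
          rwa [indicator_of_mem (kk_mem v hv.1 n)] at this
      _ ≤ liminf (fun n => ∫⁻ v in Ioo (0:ℝ) 1, f n v) atTop := lintegral_liminf_le hfm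
      _ ≤ _ := by
          refine liminf_le_liminf ?_
          filter_upwards [eventually_ge_atTop 1] with n hn
          have hn' : (0 : ℝ) < n := by exact_mod_cast hn
          calc _ ≤ ∫⁻ v, f n v := setLIntegral_le_lintegral _ _
            _ = ∑ k ∈ Finset.Icc 1 n, c n k * ENNReal.ofReal (1 / ((n : ℝ) + 1)) := by
              simp only [hf]
              rw [lintegral_finsetSum]
              · apply Finset.sum_congr rfl
                intro k _
                rw [lintegral_indicator_const measurableSet_Ico, Real.volume_Ico, bR_sub]
              · intro k _
                exact measurable_const.indicator measurableSet_Ico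
            _ = ENNReal.ofReal (1 / ((n : ℝ) + 1)) * ∑ k ∈ Finset.Icc 1 n, c n k := by
              rw [← Finset.sum_mul, mul_comm]
            _ ≤ _ := by
              gcongr
              linarith
  · set I := ∫⁻ v in Ioo (0:ℝ) 1, ENNReal.ofReal (|φ v - ψ v| ^ p) with hI
    have hlim : Tendsto (fun n : ℕ => ENNReal.ofReal (1 + 1 / (n : ℝ)) * I) atTop (𝓝 I) := by
      have : Tendsto (fun n : ℕ => 1 + 1 / (n : ℝ)) atTop (𝓝 1) := by
        simpa using (tendsto_one_div_atTop_nhds_zero_nat (𝕜 := ℝ)).const_add 1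
      have t := ENNReal.tendsto_ofReal this
      have t2 := ENNReal.Tendsto.mul_const (b := I) t (Or.inl (by simp))
      simpa using t2
    rw [← hlim.limsup_eq]
    refine limsup_le_limsup ?_
    filter_upwards [eventually_ge_atTop 1] with n hn
    have hn' : (0 : ℝ) < n := by exact_mod_cast hn
    calc _ ≤ ENNReal.ofReal (1 / (n : ℝ)) * ∑ k ∈ Finset.Icc 1 n, (ENNReal.ofReal ((n : ℝ) + 1) *
            ∫⁻ v in Ioc (aL n k) (bR n k), ENNReal.ofReal (|φ v - ψ v| ^ p)) := by
          gcongr with k hk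
          rw [Finset.mem_Icc] at hk
          simp only [hc]
          rw [hx n k hk.1 hk.2, hy n k hk.1 hk.2]
          exact jensen p hp hφ hψ n k hk.1 hk.2
      _ ≤ ENNReal.ofReal (1 / (n : ℝ)) * (ENNReal.ofReal ((n : ℝ) + 1) * I) := by
          rw [← Finset.mul_sum]
          gcongr
          exact upper _ n
      _ = _ := by
          rw [← mul_assoc, ← ENNReal.ofReal_mul (by positivity)]
          congr 2
          field_simp
end
end
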